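/- Let (u_ε, m_ε, H̄_ε) ∈ C^∞(𝕋^d)×C^∞(𝕋^d)×ℝ, with m_ε > 0, solve the oscillating mean-field game system: (1/2)|P+∇u_ε(x)|² + V(x, x/ε) = ln(m_ε(x)) + H̄_ε(P) and −div(m_ε(x)(P+∇u_ε(x))) = 0 in 𝕋^d, with ∫_{𝕋^d} u_ε dx = 0 and ∫_{𝕋^d} m_ε dx = 1. Let q ∈ [1,∞). Then there exist positive constants C = C(P), C_q = C(q,P) and C_ε = C(ε,P) such that: sup_ε ‖u_ε‖_{W^{1,q}(𝕋^d)} ≤ C_q; 1/C ≤ inf_{𝕋^d} m_ε ≤ sup_{𝕋^d} m_ε ≤ C_ε; and sup_ε ∫_{𝕋^d} m_ε(x) ln(m_ε(x)) dx ≤ |P|²/2 + sup_{(x,y)∈𝕋^d×𝒴^d} V(x,y) − inf_{(x,y)∈𝕋^d×𝒴^d} V(x,y). -/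

import Mathlib

open MeasureTheory Filter Topology Function

noncomputable section

/-- The unit cell `𝒴^d = [0,1)^d`. -/
def cube (d : ℕ) : Set (Fin d → ℝ) := Set.univ.pi fun _ => Set.Ico (0 : ℝ) 1

/-- `ℤ^d`-periodicity of a function on `ℝ^d`; functions on the torus `𝕋^d`
(and `𝒴^d`-periodic functions) are identified with such functions. -/
def ZPer {d : ℕ} (f : (Fin d → ℝ) → ℝ) : Prop :=
  ∀ (x : Fin d → ℝ) (k : Fin d → ℤ), f (fun i => x i + (k i : ℝ)) = f x

/-- The `i`-th partial derivative. -/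
def pder {d : ℕ} (i : Fin d) (f : (Fin d → ℝ) → ℝ) (x : Fin d → ℝ) : ℝ :=
  fderiv ℝ f x (Pi.single i 1)

/-- `V : 𝕋^d × ℝ^d → ℝ` smooth, `𝒴^d`-periodic in the second variable
(and periodic in the first, i.e. defined on the torus). -/
def SmoothV {d : ℕ} (V : (Fin d → ℝ) → (Fin d → ℝ) → ℝ) : Prop :=
  ContDiff ℝ (⊤ : ℕ∞) (uncurry V) ∧ (∀ y, ZPer fun x => V x y) ∧ (∀ x, ZPer (V x))

/-- `sup_{(x,y) ∈ 𝕋^d × 𝒴^d} V (x,y)` (by periodicity, the sup over all of `ℝ^d × ℝ^d`). -/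
def supV {d : ℕ} (V : (Fin d → ℝ) → (Fin d → ℝ) → ℝ) : ℝ :=
  ⨆ q : (Fin d → ℝ) × (Fin d → ℝ), V q.1 q.2

/-- `inf_{(x,y) ∈ 𝕋^d × 𝒴^d} V (x,y)`. -/
def infV {d : ℕ} (V : (Fin d → ℝ) → (Fin d → ℝ) → ℝ) : ℝ :=
  ⨅ q : (Fin d → ℝ) × (Fin d → ℝ), V q.1 q.2

/-- `(u, m, H)` is a (smooth, positive, normalized) solution of the `ε`-oscillating
MFG system of Problem 1:
`|P+∇u|²/2 + V(x,x/ε) = ln m + H`, `-div(m (P+∇u)) = 0`, `∫ u = 0`, `∫ m = 1`. -/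
def SolvesMFG {d : ℕ} (P : Fin d → ℝ) (V : (Fin d → ℝ) → (Fin d → ℝ) → ℝ)
    (ε : ℝ) (u m : (Fin d → ℝ) → ℝ) (H : ℝ) : Prop :=
  ContDiff ℝ (⊤ : ℕ∞) u ∧ ZPer u ∧ ContDiff ℝ (⊤ : ℕ∞) m ∧ ZPer m ∧ (∀ x, 0 < m x) ∧
  (∀ x, (∑ i, (P i + pder i u x) ^ 2) / 2 + V x (ε⁻¹ • x) = Real.log (m x) + H) ∧
  (∀ x, (∑ i, pder i (fun z => m z * (P i + pder i u z)) x) = 0) ∧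
  (∫ x in cube d, u x) = 0 ∧ (∫ x in cube d, m x) = 1


lemma cube_eq (d : ℕ) : cube d = ZSpan.fundamentalDomain (Pi.basisFun ℝ (Fin d)) :=
  ZSpan.fundamentalDomain_pi_basisFun.symm

lemma cube_meas (d : ℕ) : MeasurableSet (cube d) :=
  MeasurableSet.univ_pi fun _ => measurableSet_Ico

lemma cube_vol (d : ℕ) : volume (cube d) = 1 := by
  simp [cube, volume_pi_pi]

instance cube_prob (d : ℕ) : IsProbabilityMeasure (volume.restrict (cube d)) :=
  ⟨by simp [cube_vol]⟩

instance int_prob : IsProbabilityMeasure (volume.restrict (Set.Ioc (0 : ℝ) 1)) :=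
  ⟨by simp⟩

/-- measures carried by a compact set -/
def CptM {X : Type*} [TopologicalSpace X] [MeasurableSpace X] (μ : Measure X) : Prop :=
  ∃ K : Set X, IsCompact K ∧ ∀ᵐ x ∂μ, x ∈ K

lemma CptM.prod {X Y : Type*} [TopologicalSpace X] [MeasurableSpace X] [TopologicalSpace Y]
    [MeasurableSpace Y] {μ : Measure X} {ν : Measure Y} [SFinite μ] [SFinite ν]
    (h : CptM μ) (h' : CptM ν) : CptM (μ.prod ν) := by
  obtain ⟨K, hK, h⟩ := h
  obtain ⟨L, hL, h'⟩ := h'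
  refine ⟨K ×ˢ L, hK.prod hL, ?_⟩
  have h1 := (Measure.quasiMeasurePreserving_fst (μ := μ) (ν := ν)).ae h
  have h2 := (Measure.quasiMeasurePreserving_snd (μ := μ) (ν := ν)).ae h'
  filter_upwards [h1, h2] with x a b
  exact ⟨a, b⟩

lemma CptM.integrable {X : Type*} [TopologicalSpace X] [MeasurableSpace X]
    [OpensMeasurableSpace X]
    {μ : Measure X} [IsFiniteMeasure μ] (h : CptM μ) {f : X → ℝ} (hf : Continuous f) :
    Integrable f μ := by
  obtain ⟨K, hK, h⟩ := h
  obtain ⟨C, hC⟩ := hK.exists_bound_of_continuousOn hf.continuousOn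
  refine Integrable.of_bound hf.measurable.aestronglyMeasurable C ?_
  filter_upwards [h] with x hx using hC x hx

lemma cube_cpt (d : ℕ) : CptM (volume.restrict (cube d)) := by
  refine ⟨Set.univ.pi fun _ => Set.Icc (0 : ℝ) 1, isCompact_univ_pi fun _ => isCompact_Icc, ?_⟩
  filter_upwards [ae_restrict_mem (cube_meas d)] with x hx i hi
  exact Set.Ico_subset_Icc_self (hx i hi)

lemma int_cpt : CptM (volume.restrict (Set.Ioc (0 : ℝ) 1)) := by
  refine ⟨Set.Icc (0 : ℝ) 1, isCompact_Icc, ?_⟩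
  filter_upwards [ae_restrict_mem measurableSet_Ioc] with x hx
  exact Set.Ioc_subset_Icc_self hx

lemma cube_int {d : ℕ} {f : (Fin d → ℝ) → ℝ} (hf : Continuous f) :
    Integrable f (volume.restrict (cube d)) := (cube_cpt d).integrable hf

/-- translation invariance of the integral over a period -/
lemma trans_int {d : ℕ} {f : (Fin d → ℝ) → ℝ} (hf : ZPer f) (v : Fin d → ℝ) :
    ∫ x in cube d, f (x + v) = ∫ x in cube d, f x := by
  have h1 := ZSpan.isAddFundamentalDomain' (Pi.basisFun ℝ (Fin d)) volume
  have h2 := h1.vadd_of_comm v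
  have : Countable (Submodule.span ℤ (Set.range (Pi.basisFun ℝ (Fin d)))).toAddSubgroup :=
    inferInstanceAs (Countable (Submodule.span ℤ (Set.range (Pi.basisFun ℝ (Fin d)))))
  have h3 := h2.setIntegral_eq h1 (f := f) (by
    rintro ⟨g, hg⟩ x
    rw [Submodule.mem_toAddSubgroup, Submodule.mem_span_range_iff_exists_fun] at hg
    obtain ⟨c, rfl⟩ := hg
    rw [← hf x c]
    congr 1
    ext i
    simp [AddSubgroup.vadd_def, Finset.sum_apply, Pi.single_apply, add_comm])
  rw [cube_eq, ← h3, ← Set.image_vadd,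
    (measurePreserving_vadd v volume).setIntegral_image_emb (measurableEmbedding_const_vadd v)]
  simp [vadd_eq_add, add_comm]

lemma fract_rep {d : ℕ} (x : Fin d → ℝ) : ∃ y ∈ Set.univ.pi (fun _ : Fin d => Set.Icc (0 : ℝ) 1),
    ∃ k : Fin d → ℤ, x = fun i => y i + (k i : ℝ) := by
  refine ⟨fun i => Int.fract (x i), fun i _ => ⟨Int.fract_nonneg _, (Int.fract_lt_one _).le⟩,
    fun i => ⌊x i⌋, ?_⟩
  ext i
  simp

lemma zper_bdd {d : ℕ} {f : (Fin d → ℝ) → ℝ} (hf : ZPer f) (hc : Continuous f) :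
    ∃ C, ∀ x, f x ≤ C := by
  obtain ⟨C, hC⟩ := (isCompact_univ_pi fun _ : Fin d =>
    isCompact_Icc (a := (0:ℝ)) (b := 1)).exists_bound_of_continuousOn hc.continuousOn
  refine ⟨C, fun x => ?_⟩
  obtain ⟨y, hy, k, rfl⟩ := fract_rep x
  rw [hf]
  exact (le_abs_self _).trans (hC y hy)

lemma V_bdd {d : ℕ} {V : (Fin d → ℝ) → (Fin d → ℝ) → ℝ} (hV : SmoothV V) :
    ∀ x y, infV V ≤ V x y ∧ V x y ≤ supV V := by
  obtain ⟨h1, h2, h3⟩ := hV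
  have hc := (isCompact_univ_pi fun _ : Fin d => isCompact_Icc (a := (0:ℝ)) (b := 1))
  obtain ⟨C, hC⟩ := (hc.prod hc).exists_bound_of_continuousOn h1.continuous.continuousOn
  have hb : ∀ q : (Fin d → ℝ) × (Fin d → ℝ), |V q.1 q.2| ≤ C := by
    rintro ⟨x, y⟩
    obtain ⟨x', hx, k, rfl⟩ := fract_rep x
    obtain ⟨y', hy, l, rfl⟩ := fract_rep y
    have e1 := h2 (fun i => y' i + (l i : ℝ)) x' k
    have e2 := h3 x' y' l
    simp only at e1 e2 ⊢
    rw [e1, e2]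
    exact hC (x', y') ⟨hx, hy⟩
  intro x y
  exact ⟨ciInf_le (f := fun q : (Fin d → ℝ) × (Fin d → ℝ) => V q.1 q.2)
      ⟨-C, by rintro _ ⟨q, rfl⟩; exact (abs_le.1 (hb q)).1⟩ (x, y),
    le_ciSup (f := fun q : (Fin d → ℝ) × (Fin d → ℝ) => V q.1 q.2)
      ⟨C, by rintro _ ⟨q, rfl⟩; exact (abs_le.1 (hb q)).2⟩ (x, y)⟩

lemma fderiv_per {d : ℕ} {f : (Fin d → ℝ) → ℝ} (hf : ZPer f) (i : Fin d) : ZPer (pder i f) := by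
  intro x k
  unfold pder
  have : fderiv ℝ f (fun i => x i + (k i : ℝ)) = fderiv ℝ f x := by
    have h := fderiv_comp_add_right (𝕜 := ℝ) (f := f) (x := x) (fun i => (k i : ℝ))
    have e : (fun x => f (x + fun i => (k i : ℝ))) = f := funext fun y => hf y k
    rw [e] at h
    exact h.symm
  rw [this]

lemma pder_smooth {d : ℕ} {f : (Fin d → ℝ) → ℝ} (hf : ContDiff ℝ (⊤ : ℕ∞) f) (i : Fin d) :
    ContDiff ℝ (⊤ : ℕ∞) (pder i f) := by
  unfold pder
  exact (hf.fderiv_right (m := (⊤ : ℕ∞)) (by simp)).clm_apply contDiff_const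

lemma fderiv_pder_sum {d : ℕ} (f : (Fin d → ℝ) → ℝ) (x z : Fin d → ℝ) :
    fderiv ℝ f x z = ∑ i, z i * pder i f x := by
  have : z = ∑ i, z i • (Pi.single i (1:ℝ) : Fin d → ℝ) := by
    ext j; simp [Finset.sum_apply, Pi.single_apply]
  conv_lhs => rw [this]
  simp [pder]

lemma ftc_seg {d : ℕ} {f : (Fin d → ℝ) → ℝ} (hf : ContDiff ℝ (⊤ : ℕ∞) f) (x z : Fin d → ℝ) :
    ∫ t in Set.Ioc (0:ℝ) 1, fderiv ℝ f (x + t • z) z = f (x + z) - f x := by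
  rw [← intervalIntegral.integral_of_le zero_le_one]
  have hd : Continuous (fderiv ℝ f) := hf.continuous_fderiv (by simp)
  rw [intervalIntegral.integral_eq_sub_of_hasDerivAt (f := fun t => f (x + t • z))]
  · simp
  · intro t _
    have h1 : HasDerivAt (fun t : ℝ => x + t • z) z t := by
      simpa using ((hasDerivAt_id t).smul_const z).const_add x
    exact ((hf.differentiable (by simp)).differentiableAt.hasFDerivAt).comp_hasDerivAt t h1
  · apply Continuous.intervalIntegrable
    fun_prop

lemma int_pder {d : ℕ} {f : (Fin d → ℝ) → ℝ} (hf : ContDiff ℝ (⊤ : ℕ∞) f) (hp : ZPer f)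
    (i : Fin d) : ∫ x in cube d, pder i f x = 0 := by
  have hc : Continuous (pder i f) := (pder_smooth hf i).continuous
  have h1 : ∫ x in cube d, ∫ t in Set.Ioc (0:ℝ) 1, pder i f (x + t • Pi.single i 1) = 0 := by
    have : ∀ x, ∫ t in Set.Ioc (0:ℝ) 1, pder i f (x + t • Pi.single i 1) = 0 := by
      intro x
      have h := ftc_seg hf x (Pi.single i 1)
      have e : f (x + Pi.single i 1) = f x := by
        rw [← hp x (Pi.single i 1)]
        congr 1
        ext j
        by_cases hj : j = i
        · subst hj; simp
        · simp [hj]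
      rw [e, sub_self] at h
      exact h
    simp [this]
  rw [integral_integral_swap] at h1
  · simp only [trans_int (fderiv_per hp i)] at h1
    simpa using h1
  · apply ((cube_cpt d).prod int_cpt).integrable
    simp only [Function.uncurry_def]
    fun_prop

lemma poinc {d : ℕ} {u : (Fin d → ℝ) → ℝ} (hu : ContDiff ℝ (⊤ : ℕ∞) u) (hp : ZPer u)
    (h0 : ∫ x in cube d, u x = 0) (m : (Fin d → ℝ) → ℝ) (hm : Continuous m) (hmp : ZPer m)
    (h1 : ∫ x in cube d, m x = 1) (K : ℝ)
    (hK : ∀ x, Real.exp (∑ i, |pder i u x|) ≤ K * m x) :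
    ∫ x in cube d, Real.exp |u x| ≤ K := by
  set ρ := (volume.restrict (cube d)).prod (volume.restrict (Set.Ioc (0 : ℝ) 1)) with hρ
  have hρc : CptM ρ := (cube_cpt d).prod int_cpt
  have hd : Continuous (fderiv ℝ u) := hu.continuous_fderiv (by simp)
  have hpc : ∀ i, Continuous (pder i u) := fun i => (pder_smooth hu i).continuous
  have huc := hu.continuous
  have hrep : ∀ x, -u x = ∫ p, fderiv ℝ u (x + p.2 • p.1) p.1 ∂ρ := by
    intro x
    rw [hρ, integral_prod _ (hρc.integrable (by fun_prop))]
    simp only [ftc_seg hu]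
    rw [integral_sub (cube_int (by fun_prop)) (cube_int (by fun_prop))]
    have := trans_int hp x
    simp only [add_comm _ x] at this
    rw [this, h0]
    simp
  have hz : ∀ᵐ p ∂ρ, ∀ i, |p.1 i| ≤ 1 := by
    have := (Measure.quasiMeasurePreserving_fst (μ := volume.restrict (cube d))
      (ν := volume.restrict (Set.Ioc (0 : ℝ) 1))).ae (ae_restrict_mem (cube_meas d))
    filter_upwards [this] with p hp i
    have := hp i trivial
    rw [abs_of_nonneg this.1]
    exact this.2.le
  have hgc : Continuous fun x => ∑ i, |pder i u x| := by fun_prop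
  have hpt : ∀ x, Real.exp |u x| ≤ K * ∫ p, m (x + p.2 • p.1) ∂ρ := by
    intro x
    have hA : |u x| ≤ ∫ p, (∑ i, |pder i u (x + p.2 • p.1)|) ∂ρ := by
      rw [← abs_neg, hrep x]
      refine (abs_integral_le_integral_abs).trans ?_
      refine integral_mono_ae (hρc.integrable (by fun_prop)) (hρc.integrable (by fun_prop)) ?_
      filter_upwards [hz] with p hp
      rw [fderiv_pder_sum]
      refine (Finset.abs_sum_le_sum_abs _ _).trans (Finset.sum_le_sum fun i _ => ?_)
      rw [abs_mul]
      exact mul_le_of_le_one_left (abs_nonneg _) (hp i)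
    refine (Real.exp_le_exp.2 hA).trans ?_
    refine (convexOn_exp.map_integral_le Real.continuous_exp.continuousOn isClosed_univ
      (by simp) (hρc.integrable (by fun_prop)) (hρc.integrable (by fun_prop))).trans ?_
    rw [← integral_const_mul]
    exact integral_mono (hρc.integrable (by fun_prop)) (hρc.integrable (by fun_prop))
      fun p => hK _
  have hmm : Continuous (uncurry fun (x : Fin d → ℝ) (p : (Fin d → ℝ) × ℝ) =>
      m (x + p.2 • p.1)) := by
    simp only [Function.uncurry_def]
    fun_prop
  have hI := ((cube_cpt d).prod hρc).integrable hmm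
  calc ∫ x in cube d, Real.exp |u x|
      ≤ ∫ x in cube d, K * ∫ p, m (x + p.2 • p.1) ∂ρ :=
        integral_mono (cube_int (by fun_prop)) (hI.integral_prod_left.const_mul K) hpt
    _ = K := by
        rw [integral_const_mul, integral_integral_swap hI]
        simp only [trans_int hmp, h1]
        simp

lemma rpow_le_exp (q : ℝ) (hq : 1 ≤ q) : ∃ C > 0, ∀ a ≥ 0, a ^ q ≤ C * Real.exp a := by
  have hq0 : 0 < q := by linarith
  refine ⟨q ^ q, Real.rpow_pos_of_pos hq0 _, fun a ha => ?_⟩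
  have h1 : a ≤ q * Real.exp (a / q) := by
    have := Real.add_one_le_exp (a / q)
    have h2 : q * (a / q) = a := by field_simp
    nlinarith
  calc a ^ q ≤ (q * Real.exp (a / q)) ^ q := Real.rpow_le_rpow ha h1 hq0.le
    _ = q ^ q * Real.exp a := by
      rw [Real.mul_rpow hq0.le (Real.exp_pos _).le, ← Real.exp_mul]
      congr 2
      field_simp

section sol

variable {d : ℕ} {P : Fin d → ℝ} {V : (Fin d → ℝ) → (Fin d → ℝ) → ℝ}
  {ε : ℝ} {u m : (Fin d → ℝ) → ℝ} {H : ℝ}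

/-- energy identity consequence -/
lemma energy (h : SolvesMFG P V ε u m H) :
    ∫ x in cube d, m x * ((∑ i, (P i + pder i u x) ^ 2) / 2) ≤ (∑ i, (P i) ^ 2) / 2 := by
  obtain ⟨hu, hup, hm, hmp, hpos, -, hdiv, -, h1⟩ := h
  have hpc : ∀ i, Continuous (pder i u) := fun i => (pder_smooth hu i).continuous
  have huc := hu.continuous
  have hmc := hm.continuous
  have hFs : ∀ i, ContDiff ℝ (⊤ : ℕ∞) (fun z => m z * (P i + pder i u z)) := fun i =>
    hm.mul (contDiff_const.add (pder_smooth hu i))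
  have hFp : ∀ i, ZPer (fun z => m z * (P i + pder i u z)) := fun i x k => by
    have a := hmp x k
    have b := fderiv_per hup i x k
    simp only [a, b]
  have hprod : ∀ i x, pder i (fun z => u z * (m z * (P i + pder i u z))) x =
      u x * pder i (fun z => m z * (P i + pder i u z)) x + (m x * (P i + pder i u x)) * pder i u x := by
    intro i x
    have := fderiv_fun_mul (𝕜 := ℝ) (hu.differentiable (by simp)).differentiableAt
      ((hFs i).differentiable (by simp)).differentiableAt (x := x)
    unfold pder at this ⊢
    rw [this]
    simp
  have hz : ∀ i, ∫ x in cube d, pder i (fun z => u z * (m z * (P i + pder i u z))) x = 0 :=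
    fun i => int_pder (hu.mul (hFs i)) (fun x k => by
      have a := hup x k
      have b := hFp i x k
      simp only at a b ⊢
      rw [a, b]) i
  have hsum : ∫ x in cube d, ∑ i, (m x * (P i + pder i u x)) * pder i u x = 0 := by
    have e : ∀ x, ∑ i, (m x * (P i + pder i u x)) * pder i u x =
        ∑ i, pder i (fun z => u z * (m z * (P i + pder i u z))) x := by
      intro x
      simp only [hprod, Finset.sum_add_distrib, ← Finset.mul_sum]
      rw [hdiv x]
      simp
    simp only [e]
    rw [integral_finset_sum _ fun i _ => cube_int
      (pder_smooth (hu.mul (hFs i)) i).continuous]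
    simp only [hz, Finset.sum_const_zero]
  have key : ∫ x in cube d, (m x * ((∑ i, (P i + pder i u x) ^ 2) / 2)
      - ∑ i, (m x * (P i + pder i u x)) * pder i u x) ≤
      ∫ x in cube d, m x * ((∑ i, (P i) ^ 2) / 2) := by
    refine integral_mono (cube_int (by fun_prop)) (cube_int (by fun_prop)) fun x => ?_
    simp only [mul_assoc, ← Finset.mul_sum, ← mul_sub]
    refine mul_le_mul_of_nonneg_left ?_ (hpos x).le
    rw [Finset.sum_div, Finset.sum_div, ← Finset.sum_sub_distrib]
    refine Finset.sum_le_sum fun i _ => ?_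
    nlinarith [sq_nonneg (pder i u x)]
  rw [integral_sub (cube_int (by fun_prop)) (cube_int (by fun_prop)), hsum, integral_mul_const,
    h1] at key
  linarith

lemma H_lower (hV : SmoothV V) (h : SolvesMFG P V ε u m H) : infV V ≤ H := by
  obtain ⟨hu, hup, hm, hmp, hpos, heq, -, -, h1⟩ := h
  have hmc := hm.continuous
  have : ∫ x in cube d, infV V ≤ ∫ x in cube d, (m x + (H - 1)) := by
    refine integral_mono (cube_int continuous_const) (cube_int (by fun_prop)) fun x => ?_
    have a := heq x
    have b := (V_bdd hV x (ε⁻¹ • x)).1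
    have c := Real.log_le_sub_one_of_pos (hpos x)
    have e : 0 ≤ (∑ i, (P i + pder i u x) ^ 2) / 2 := by positivity
    show infV V ≤ m x + (H - 1)
    linarith
  rw [integral_add (cube_int hmc) (cube_int continuous_const), h1] at this
  simp at this
  linarith

lemma entropy_upper (hV : SmoothV V) (h : SolvesMFG P V ε u m H) :
    ∫ x in cube d, m x * Real.log (m x) ≤ (∑ i, (P i) ^ 2) / 2 + supV V - H := by
  have hE := energy h
  obtain ⟨hu, hup, hm, hmp, hpos, heq, -, -, h1⟩ := h
  have hmc := hm.continuous
  have hpc : ∀ i, Continuous (pder i u) := fun i => (pder_smooth hu i).continuous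
  have hl : Continuous fun x => Real.log (m x) := hmc.log fun x => (hpos x).ne'
  have : ∫ x in cube d, m x * Real.log (m x) ≤
      ∫ x in cube d, (m x * ((∑ i, (P i + pder i u x) ^ 2) / 2) + m x * (supV V - H)) := by
    refine integral_mono (cube_int (by fun_prop)) (cube_int (by fun_prop)) fun x => ?_
    have a := heq x
    have b := (V_bdd hV x (ε⁻¹ • x)).2
    show m x * Real.log (m x) ≤ _
    rw [← mul_add]
    exact mul_le_mul_of_nonneg_left (by linarith) (hpos x).le
  rw [integral_add (cube_int (by fun_prop)) (cube_int (by fun_prop)), integral_mul_const,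
    h1] at this
  linarith

lemma H_upper (hV : SmoothV V) (h : SolvesMFG P V ε u m H) :
    H ≤ (∑ i, (P i) ^ 2) / 2 + supV V := by
  have hE := entropy_upper hV h
  obtain ⟨hu, hup, hm, hmp, hpos, heq, -, -, h1⟩ := h
  have hmc := hm.continuous
  have hl : Continuous fun x => Real.log (m x) := hmc.log fun x => (hpos x).ne'
  have : ∫ x in cube d, (m x - 1) ≤ ∫ x in cube d, m x * Real.log (m x) := by
    refine integral_mono (cube_int (by fun_prop)) (cube_int (by fun_prop)) fun x => ?_
    have a := Real.one_sub_inv_le_log_of_pos (hpos x)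
    have b := mul_le_mul_of_nonneg_left a (hpos x).le
    rw [mul_sub, mul_inv_cancel₀ (hpos x).ne', mul_one] at b
    exact b
  rw [integral_sub (cube_int hmc) (cube_int continuous_const), h1] at this
  simp at this
  linarith

lemma m_lower (hV : SmoothV V) (h : SolvesMFG P V ε u m H) (x : Fin d → ℝ) :
    Real.exp ((∑ i, (P i + pder i u x) ^ 2) / 2) ≤
      Real.exp ((∑ i, (P i) ^ 2) / 2 + supV V - infV V) * m x := by
  have hE := H_upper hV h
  obtain ⟨hu, hup, hm, hmp, hpos, heq, -, -, h1⟩ := h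
  have a := heq x
  have b := (V_bdd hV x (ε⁻¹ • x)).1
  conv_rhs => rw [← Real.exp_log (hpos x)]
  rw [← Real.exp_add, Real.exp_le_exp]
  linarith

lemma grad_exp (hV : SmoothV V) (h : SolvesMFG P V ε u m H) (x : Fin d → ℝ) :
    Real.exp (∑ i, |pder i u x|) ≤
      (Real.exp (∑ i, (1 + |P i|)) * Real.exp ((∑ i, (P i) ^ 2) / 2 + supV V - infV V)) * m x := by
  rw [mul_assoc]
  refine le_trans ?_ (mul_le_mul_of_nonneg_left (m_lower hV h x) (Real.exp_pos _).le)
  rw [← Real.exp_add, Real.exp_le_exp, Finset.sum_div, ← Finset.sum_add_distrib]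
  refine Finset.sum_le_sum fun i _ => ?_
  have e1 : |pder i u x| ≤ |P i + pder i u x| + |P i| := by
    have := abs_sub (P i + pder i u x) (P i)
    simpa using this
  have e2 := sq_abs (P i + pder i u x)
  nlinarith [sq_nonneg (|P i + pder i u x| - 1)]

lemma sobolev (hV : SmoothV V) (h : SolvesMFG P V ε u m H) {q C K : ℝ} (hq : 1 ≤ q) (hC0 : 0 < C)
    (hC : ∀ a ≥ 0, a ^ q ≤ C * Real.exp a)
    (hK : K = Real.exp (∑ i, (1 + |P i|)) * Real.exp ((∑ i, (P i) ^ 2) / 2 + supV V - infV V)) :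
    (∫ x in cube d, |u x| ^ q) + ∑ i, ∫ x in cube d, |pder i u x| ^ q ≤ C * K + d * (C * K) := by
  have hg := grad_exp hV h
  rw [← hK] at hg
  obtain ⟨hu, hup, hm, hmp, hpos, heq, -, h0, h1⟩ := h
  have hmc := hm.continuous
  have huc := hu.continuous
  have hpc : ∀ i, Continuous (pder i u) := fun i => (pder_smooth hu i).continuous
  have hq0 : 0 ≤ q := by linarith
  refine add_le_add ?_ ?_
  · have := poinc hu hup h0 m hmc hmp h1 K hg
    refine le_trans ?_ (mul_le_mul_of_nonneg_left this hC0.le)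
    rw [← integral_const_mul]
    exact integral_mono (cube_int (huc.abs.rpow_const fun _ => Or.inr hq0))
      (cube_int (by fun_prop)) fun x => hC _ (abs_nonneg _)
  · have : ∀ i ∈ Finset.univ, ∫ x in cube d, |pder i u x| ^ q ≤ C * K := by
      intro i _
      have : ∫ x in cube d, |pder i u x| ^ q ≤ ∫ x in cube d, C * (K * m x) := by
        refine integral_mono (cube_int ((hpc i).abs.rpow_const fun _ => Or.inr hq0))
          (cube_int (by fun_prop)) fun x => (hC _ (abs_nonneg _)).trans ?_
        refine mul_le_mul_of_nonneg_left (le_trans ?_ (hg x)) hC0.le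
        rw [Real.exp_le_exp]
        exact Finset.single_le_sum (f := fun i => |pder i u x|) (fun i _ => abs_nonneg _)
          (Finset.mem_univ i)
      rwa [integral_const_mul, integral_const_mul, h1, mul_one] at this
    simpa using Finset.sum_le_sum this

end sol

/-- uniform bounds for the solutions `(u_ε, m_ε, H̄_ε)` of the oscillating
MFG system: a uniform `W^{1,q}(𝕋^d)` bound on `u_ε`, a uniform positive lower bound and an
`ε`-dependent upper bound on `m_ε`, and a uniform bound on `∫ m_ε ln m_ε`. -/
theorem stmt4 {d : ℕ} (P : Fin d → ℝ) (V : (Fin d → ℝ) → (Fin d → ℝ) → ℝ)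
    (hV : SmoothV V) (q : ℝ) (hq : 1 ≤ q)
    (ε : ℕ → ℝ) (hεpos : ∀ n, 0 < ε n) (hε0 : Tendsto ε atTop (𝓝 0))
    (u m : ℕ → (Fin d → ℝ) → ℝ) (H : ℕ → ℝ)
    (hsol : ∀ n, SolvesMFG P V (ε n) (u n) (m n) (H n)) :
    (∃ Cq > 0, ∀ n,
        ((∫ x in cube d, |u n x| ^ q) + ∑ i, ∫ x in cube d, |pder i (u n) x| ^ q) ^ (1 / q)
          ≤ Cq) ∧
    (∃ C > 0, (∀ n x, 1 / C ≤ m n x) ∧ (∀ n, ∃ Cε > 0, ∀ x, m n x ≤ Cε)) ∧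
    (∀ n, (∫ x in cube d, m n x * Real.log (m n x)) ≤
        (∑ i, (P i) ^ 2) / 2 + supV V - infV V) := by
  refine ⟨?_, ?_, ?_⟩
  · obtain ⟨C, hC0, hC⟩ := rpow_le_exp q hq
    set K := Real.exp (∑ i, (1 + |P i|)) * Real.exp ((∑ i, (P i) ^ 2) / 2 + supV V - infV V)
      with hK
    have hK0 : 0 < K := by positivity
    refine ⟨(C * K + d * (C * K)) ^ (1 / q), by positivity, fun n => ?_⟩
    refine Real.rpow_le_rpow ?_ (sobolev hV (hsol n) hq hC0 hC hK) (by positivity)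
    exact add_nonneg (integral_nonneg fun x => by positivity)
      (Finset.sum_nonneg fun i _ => integral_nonneg fun x => by positivity)
  · refine ⟨Real.exp ((∑ i, (P i) ^ 2) / 2 + supV V - infV V), Real.exp_pos _, fun n x => ?_,
      fun n => ?_⟩
    · rw [div_le_iff₀' (Real.exp_pos _)]
      exact (Real.one_le_exp (by positivity)).trans (m_lower hV (hsol n) x)
    · obtain ⟨-, -, hm, hmp, -⟩ := hsol n
      obtain ⟨C, hC⟩ := zper_bdd hmp hm.continuous
      exact ⟨max C 1, by positivity, fun x => (hC x).trans (le_max_left _ _)⟩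
  · intro n
    have a := entropy_upper hV (hsol n)
    have b := H_lower hV (hsol n)
    linarith
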